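/- arXiv:2509.13432 — 4 statements merged into one kernel-verified Lean document; each statement's English description precedes it below -/
import Mathlib

section
/- The swapped map F̃₁ (equal to F₂ on T and to F₁ off T) is a bijection of V if and only if T is x-invariant, i.e. x(T) = T; and in that case F̃₂ is also a bijection of V. -/
/-!
A map glued from `f` on `T` and `g` off `T` is bijective exactly when both pieces are injective and
the images `f(T)` and `g(Tᶜ)` partition the codomain. If `g` is bijective then `g(Tᶜ) = g(T)ᶜ`, so
the partition condition says `f(T) = g(T)`; this is symmetric in `f` and `g`, and applying `F₂⁻¹`
turns `F₁(T) = F₂(T)` into `x(T) = T`.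
-/

section Piecewise

open Function Set

variable {α β : Type*} {T : Set α} [DecidablePred (· ∈ T)] {f g : α → β}

theorem bijective_piecewise_iff_isCompl :
    Bijective (T.piecewise f g) ↔ InjOn f T ∧ InjOn g Tᶜ ∧ IsCompl (f '' T) (g '' Tᶜ) := by
  have injective_iff : Injective (T.piecewise f g) ↔
      InjOn f T ∧ InjOn g Tᶜ ∧ Disjoint (f '' T) (g '' Tᶜ) := by
    simp only [injective_piecewise_iff, disjoint_iff_forall_ne, forall_mem_image, mem_compl_iff]
  have surjective_iff : Surjective (T.piecewise f g) ↔ Codisjoint (f '' T) (g '' Tᶜ) := by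
    simp only [← range_eq_univ, range_piecewise, codisjoint_iff, sup_eq_union, top_eq_univ]
  rw [Bijective, injective_iff, surjective_iff, isCompl_iff, and_assoc, and_assoc]

theorem bijective_piecewise_iff_image_eq (hf : InjOn f T) (hg : Bijective g) :
    Bijective (T.piecewise f g) ↔ f '' T = g '' T := by
  rw [bijective_piecewise_iff_isCompl, and_iff_right hf, and_iff_right hg.injective.injOn,
    image_compl_eq hg, ← eq_compl_iff_isCompl, compl_compl]

end Piecewise

theorem image_trans_symm_eq_iff {α β γ : Type*} (e : α ≃ γ) (f : β ≃ γ) (S : Set α) (T : Set β) :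
    e.trans f.symm '' S = T ↔ e '' S = f '' T := by
  rw [Equiv.coe_trans, Set.image_comp, Equiv.eq_image_iff_symm_image_eq]

theorem swapped_bijective_iff_invariant_general {V W : Type*} (F₁ F₂ : V ≃ W) (T : Set V)
    [DecidablePred (· ∈ T)] :
    (Function.Bijective (fun v : V => if v ∈ T then F₂ v else F₁ v) ↔
      F₁.trans F₂.symm '' T = T) ∧
    (F₁.trans F₂.symm '' T = T →
      Function.Bijective (fun v : V => if v ∈ T then F₁ v else F₂ v)) := by
  rw [image_trans_symm_eq_iff]
  exact ⟨(bijective_piecewise_iff_image_eq F₂.injective.injOn F₁.bijective).trans eq_comm,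
    (bijective_piecewise_iff_image_eq F₁.injective.injOn F₂.bijective).mpr⟩

/-- Swapped maps are bijections iff the swap set is x-invariant:
the swapped map `F̃₁` (equal to `F₂` on `T` and `F₁` off `T`) is a bijection of `V`
iff `x(T) = T` where `x = F₂⁻¹ ∘ F₁`; and in that case the swapped map `F̃₂` is
also a bijection. -/
theorem swapped_bijective_iff_invariant
    {V : Type*} [Fintype V] (F₁ F₂ : Equiv.Perm V)
    (hne : ∀ v : V, F₁ v ≠ F₂ v)
    (T : Set V) [DecidablePred (· ∈ T)] :
    (Function.Bijective (fun v : V => if v ∈ T then F₂ v else F₁ v) ↔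
      ⇑(F₂⁻¹ * F₁) '' T = T) ∧
    (⇑(F₂⁻¹ * F₁) '' T = T →
      Function.Bijective (fun v : V => if v ∈ T then F₁ v else F₂ v)) :=
  swapped_bijective_iff_invariant_general F₁ F₂ T
end

section
/- Suppose T ⊆ V satisfies x(T) = T. Then the relative permutation x̃ = F̃₂⁻¹ ∘ F̃₁ of the swapped pair satisfies x̃(v) = x⁻¹(v) for all v ∈ T and x̃(v) = x(v) for all v ∉ T. Consequently the orbit partition of V under x̃ coincides with the orbit partition under x; in particular any pattern of label swaps on alternating cycles leaves the position-block partition determined by the x-orbits unchanged. -/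
/-!
Swapping labels on `T` exchanges the roles of `F₁` and `F₂` there, and so inverts
`x = F₂⁻¹ * F₁` on `T`: by invariance of `T`, the labels at `v` and at its image under `x` or
`x⁻¹` are swapped together. A permutation that moves each point to its image under `x` or `x⁻¹`
stays within the `x`-orbits. Since agreeing with `x⁻¹` on `T` and with `x` off `T` is, for
invariant `T`, a symmetric relation between permutations, the orbit partitions of `x` and of
`x̃ = G₂⁻¹ * G₁` refine each other.
-/

section RelativePermutation

open Equiv.Perm MulAction
open scoped Pointwise

variable {V : Type*}

theorem inv_mul_apply_congr {A B C D : Equiv.Perm V} {v : V} (hAC : A v = C v)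
    (hBD : B ((D⁻¹ * C) v) = D ((D⁻¹ * C) v)) : (B⁻¹ * A) v = (D⁻¹ * C) v := by
  rw [mul_apply, inv_eq_iff_eq, hAC, hBD, mul_apply, coe_inv, Equiv.apply_symm_apply]

theorem sameCycle_of_forall_sameCycle_apply {f g : Equiv.Perm V}
    (h : ∀ w, f.SameCycle w (g w)) {u v : V} (huv : g.SameCycle u v) : f.SameCycle u v := by
  obtain ⟨i, rfl⟩ := huv
  have hg : g ∈ stabilizer (Equiv.Perm V) {w | f.SameCycle u w} :=
    mem_stabilizer_set.2 fun w => ⟨fun hw => hw.trans (h w).symm, fun hw => hw.trans (h w)⟩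
  exact (mem_stabilizer_set.1 (zpow_mem hg i) u).2 (SameCycle.refl f u)

theorem sameCycle_of_eqOn_symm_of_eqOn_compl {f g : Equiv.Perm V} {T : Set V}
    (hsymm : Set.EqOn g f.symm T) (hcompl : Set.EqOn g f Tᶜ) {u v : V}
    (huv : g.SameCycle u v) : f.SameCycle u v := by
  refine sameCycle_of_forall_sameCycle_apply (fun w => ?_) huv
  by_cases hw : w ∈ T
  · rw [hsymm hw, sameCycle_symm_apply_right]
  · rw [hcompl hw, sameCycle_apply_right]

theorem sameCycle_iff_of_eqOn_symm_of_eqOn_compl {f g : Equiv.Perm V} {T : Set V}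
    (hT : Set.MapsTo f T T) (hsymm : Set.EqOn g f.symm T) (hcompl : Set.EqOn g f Tᶜ) {u v : V} :
    g.SameCycle u v ↔ f.SameCycle u v := by
  have hsymm' : Set.EqOn f g.symm T := fun w hw => by
    rw [Equiv.eq_symm_apply, hsymm (hT hw), Equiv.symm_apply_apply]
  exact ⟨sameCycle_of_eqOn_symm_of_eqOn_compl hsymm hcompl,
    sameCycle_of_eqOn_symm_of_eqOn_compl hsymm' hcompl.symm⟩

theorem swapped_relative_permutation_general
    (F₁ F₂ : Equiv.Perm V) (T : Set V) [DecidablePred (· ∈ T)]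
    (hT : ⇑(F₂⁻¹ * F₁) '' T = T)
    (G₁ G₂ : Equiv.Perm V)
    (hG₁ : ∀ v : V, G₁ v = if v ∈ T then F₂ v else F₁ v)
    (hG₂ : ∀ v : V, G₂ v = if v ∈ T then F₁ v else F₂ v) :
    (∀ v ∈ T, (G₂⁻¹ * G₁) v = (F₂⁻¹ * F₁)⁻¹ v) ∧
    (∀ v ∉ T, (G₂⁻¹ * G₁) v = (F₂⁻¹ * F₁) v) ∧
    (∀ u v : V, (G₂⁻¹ * G₁).SameCycle u v ↔ (F₂⁻¹ * F₁).SameCycle u v) := by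
  have hmem (v : V) : (F₂⁻¹ * F₁) v ∈ T ↔ v ∈ T := by
    simpa only [hT] using (F₂⁻¹ * F₁).injective.mem_set_image (s := T) (a := v)
  have hinv_eq : (F₂⁻¹ * F₁)⁻¹ = F₁⁻¹ * F₂ := by rw [mul_inv_rev, inv_inv]
  have hinv : ∀ v ∈ T, (G₂⁻¹ * G₁) v = (F₂⁻¹ * F₁)⁻¹ v := fun v hv => by
    have hxv : (F₁⁻¹ * F₂) v ∈ T := by rwa [← hmem, ← hinv_eq, coe_inv, Equiv.apply_symm_apply]
    rw [hinv_eq]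
    exact inv_mul_apply_congr ((hG₁ v).trans (if_pos hv)) ((hG₂ _).trans (if_pos hxv))
  have hcompl : ∀ v ∉ T, (G₂⁻¹ * G₁) v = (F₂⁻¹ * F₁) v := fun v hv =>
    inv_mul_apply_congr ((hG₁ v).trans (if_neg hv))
      ((hG₂ _).trans (if_neg (mt (hmem v).1 hv)))
  exact ⟨hinv, hcompl, fun _ _ =>
    sameCycle_iff_of_eqOn_symm_of_eqOn_compl (fun v => (hmem v).2) hinv hcompl⟩

end RelativePermutation

/-- Swap-invariance of the orbit structure: if `T` is `x`-invariant
and `(G₁, G₂)` is the swapped pair of permutations (`G₁ = F₂` on `T`, `F₁` off `T`;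
`G₂ = F₁` on `T`, `F₂` off `T`), then `x̃ = G₂⁻¹ ∘ G₁` equals `x⁻¹` on `T` and `x`
off `T`; consequently `x̃` and `x` have the same orbit partition of `V`, so any
pattern of label swaps on alternating cycles leaves the position-block partition
determined by the `x`-orbits unchanged. -/
theorem swapped_relative_permutation
    {V : Type*} [Fintype V] (F₁ F₂ : Equiv.Perm V)
    (hne : ∀ v : V, F₁ v ≠ F₂ v)
    (T : Set V) [DecidablePred (· ∈ T)]
    (hT : ⇑(F₂⁻¹ * F₁) '' T = T)
    (G₁ G₂ : Equiv.Perm V)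
    (hG₁ : ∀ v : V, G₁ v = if v ∈ T then F₂ v else F₁ v)
    (hG₂ : ∀ v : V, G₂ v = if v ∈ T then F₁ v else F₂ v) :
    (∀ v ∈ T, (G₂⁻¹ * G₁) v = (F₂⁻¹ * F₁)⁻¹ v) ∧
    (∀ v ∉ T, (G₂⁻¹ * G₁) v = (F₂⁻¹ * F₁) v) ∧
    (∀ u v : V, (G₂⁻¹ * G₁).SameCycle u v ↔ (F₂⁻¹ * F₁).SameCycle u v) :=
  swapped_relative_permutation_general F₁ F₂ T hT G₁ G₂ hG₁ hG₂
end

section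
/- Let V be a finite set and let F₁, F₂ be permutations of V with F₁(v) ≠ F₂(v) for all v ∈ V; set x = F₂⁻¹ ∘ F₁ and let r be the number of orbits of x on V. Then the number of 1-factorizations of the underlying digraph, i.e. the number of ordered pairs (G₁, G₂) of bijections of V satisfying {G₁(v), G₂(v)} = {F₁(v), F₂(v)} for every v ∈ V, equals 2^r. -/
/-!
Put `x = F₂⁻¹ * F₁`, so that `F₁ v = F₂ (x v)`. If a 1-factorization `(G₁, G₂)` has `G₁ v = F₁ v`,
then injectivity of `G₁` forbids `G₁ (x v) = F₂ (x v)`; if `G₁ v = F₂ v`, then injectivity of `G₂`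
forbids `G₂ (x v) = F₂ (x v)`. Hence the set on which `G₁` agrees with `F₁` is `x`-invariant, that
is, a union of orbits of `x`. Conversely, `F₁` and `F₂` may be interchanged independently on each
orbit, because both map an orbit of `x` onto the same set.
-/

section InvariantSets

open MulAction
open scoped Pointwise

variable {G α : Type*} [Group G] [MulAction G α]

theorem mem_iff_mem_of_orbitRel {H : Subgroup G} {S : Set α} (hS : H ≤ stabilizer G S) {a b : α}
    (hab : orbitRel H α a b) : a ∈ S ↔ b ∈ S := by
  obtain ⟨h, rfl⟩ := orbitRel_apply.mp hab
  exact mem_stabilizer_set.mp (hS h.2) b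

theorem le_stabilizer_preimage_mk (H : Subgroup G) (s : Set (orbitRel.Quotient H α)) :
    H ≤ stabilizer G ((Quotient.mk _ : α → orbitRel.Quotient H α) ⁻¹' s) := fun h hh =>
  mem_stabilizer_set.mpr fun a => by
    have hmk : (Quotient.mk _ (h • a) : orbitRel.Quotient H α) = Quotient.mk _ a :=
      Quotient.sound (mem_orbit a (⟨h, hh⟩ : H))
    rw [Set.mem_preimage, Set.mem_preimage, hmk]

/-- The `H`-invariant subsets of `α` correspond to the sets of `H`-orbits. -/
def invariantSetEquivSetOrbits (H : Subgroup G) :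
    {S : Set α // H ≤ stabilizer G S} ≃ Set (orbitRel.Quotient H α) where
  toFun S := {q | Quotient.lift (· ∈ S.1) (fun _ _ h => propext (mem_iff_mem_of_orbitRel S.2 h)) q}
  invFun s := ⟨Quotient.mk _ ⁻¹' s, le_stabilizer_preimage_mk H s⟩
  left_inv _ := rfl
  right_inv _ := Set.ext fun q => Quotient.inductionOn q fun _ => Iff.rfl

end InvariantSets

section OneFactorization

open MulAction
open Equiv (Perm)
open Subgroup (zpowers zpowers_le)
open scoped Pointwise

variable {V : Type*} {F₁ F₂ G₁ G₂ : Perm V} {S : Set V}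

/-- `(G₁, G₂)` is a 1-factorization of the 2-regular digraph with out-edges `(v, F₁ v)` and
`(v, F₂ v)` at each vertex `v`. -/
def IsOneFactorization (F₁ F₂ G₁ G₂ : Perm V) : Prop :=
  ∀ v, ({G₁ v, G₂ v} : Set V) = {F₁ v, F₂ v}

theorem isOneFactorization_iff : IsOneFactorization F₁ F₂ G₁ G₂ ↔
    ∀ v, G₁ v = F₁ v ∧ G₂ v = F₂ v ∨ G₁ v = F₂ v ∧ G₂ v = F₁ v :=
  forall_congr' fun _ => Set.pair_eq_pair_iff

theorem IsOneFactorization.snd_apply_eq (hG : IsOneFactorization F₁ F₂ G₁ G₂) {v : V}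
    (hv : G₁ v = F₁ v) : G₂ v = F₂ v :=
  (isOneFactorization_iff.mp hG v).elim And.right fun h => h.2.trans (hv.symm.trans h.1)

theorem IsOneFactorization.apply_eq_iff (hG : IsOneFactorization F₁ F₂ G₁ G₂) {v w : V}
    (hvw : F₁ v = F₂ w) : G₁ w = F₁ w ↔ G₁ v = F₁ v := by
  obtain rfl | hne := eq_or_ne v w
  · rfl
  have hv := isOneFactorization_iff.mp hG v
  have hw := isOneFactorization_iff.mp hG w
  constructor
  · intro hw₁
    have hw₂ : G₂ w = F₂ w := hG.snd_apply_eq hw₁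
    have hv_ne : G₂ v ≠ F₁ v := fun h => hne <| G₂.injective <| by rw [h, hw₂, hvw]
    exact (hv.resolve_right fun h => hv_ne h.2).1
  · intro hv₁
    have hw_ne : G₁ w ≠ F₂ w := fun h => hne <| G₁.injective <| by rw [hv₁, h, hvw]
    exact (hw.resolve_right fun h => hw_ne h.1).1

theorem IsOneFactorization.mem_stabilizer_setOf_eq (hG : IsOneFactorization F₁ F₂ G₁ G₂) :
    F₂⁻¹ * F₁ ∈ stabilizer (Perm V) {v | G₁ v = F₁ v} :=
  mem_stabilizer_set.mpr fun v => hG.apply_eq_iff (F₂.apply_symm_apply (F₁ v)).symm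

open Classical in
/-- The permutation that follows `F₁` on `S` and `F₂` off `S`. Following `F₁ = F₂ * (F₂⁻¹ * F₁)` on
`S` amounts to applying `F₂` after the restriction of `F₂⁻¹ * F₁` to its invariant set `S`. -/
noncomputable def switch (F₁ F₂ : Perm V) (S : Set V)
    (hS : F₂⁻¹ * F₁ ∈ stabilizer (Perm V) S) : Perm V :=
  F₂ * Perm.ofSubtype ((F₂⁻¹ * F₁).subtypePerm (p := (· ∈ S)) (mem_stabilizer_set.mp hS))

theorem switch_apply_of_mem (hS : F₂⁻¹ * F₁ ∈ stabilizer (Perm V) S) {v : V} (hv : v ∈ S) :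
    switch F₁ F₂ S hS v = F₁ v := by
  classical
  rw [switch, Perm.mul_apply, Perm.ofSubtype_apply_of_mem _ hv, Perm.subtypePerm_apply,
    ← Perm.mul_apply, mul_inv_cancel_left]

theorem switch_apply_of_notMem (hS : F₂⁻¹ * F₁ ∈ stabilizer (Perm V) S) {v : V} (hv : v ∉ S) :
    switch F₁ F₂ S hS v = F₂ v := by
  classical
  rw [switch, Perm.mul_apply, Perm.ofSubtype_apply_of_not_mem _ hv]

theorem eq_switch (hS : F₂⁻¹ * F₁ ∈ stabilizer (Perm V) S) {G : Perm V}
    (hmem : ∀ v ∈ S, G v = F₁ v) (hnotMem : ∀ v ∉ S, G v = F₂ v) : G = switch F₁ F₂ S hS := by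
  ext v
  by_cases hv : v ∈ S
  · rw [hmem v hv, switch_apply_of_mem hS hv]
  · rw [hnotMem v hv, switch_apply_of_notMem hS hv]

theorem setOf_switch_apply_eq (hne : ∀ v, F₁ v ≠ F₂ v)
    (hS : F₂⁻¹ * F₁ ∈ stabilizer (Perm V) S) : {v | switch F₁ F₂ S hS v = F₁ v} = S := by
  ext v
  by_cases hv : v ∈ S
  · simp only [Set.mem_ofPred_eq, switch_apply_of_mem hS hv, hv]
  · simp only [Set.mem_ofPred_eq, switch_apply_of_notMem hS hv, (hne v).symm, hv]

theorem isOneFactorization_switch (hS : F₂⁻¹ * F₁ ∈ stabilizer (Perm V) S) :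
    IsOneFactorization F₁ F₂ (switch F₁ F₂ S hS)
      (switch F₁ F₂ Sᶜ ((stabilizer_compl ..).ge hS)) := by
  refine isOneFactorization_iff.mpr fun v => ?_
  by_cases hv : v ∈ S
  · exact .inl ⟨switch_apply_of_mem hS hv, switch_apply_of_notMem _ (not_not.mpr hv)⟩
  · exact .inr ⟨switch_apply_of_notMem hS hv, switch_apply_of_mem _ hv⟩

theorem IsOneFactorization.fst_eq_switch (hG : IsOneFactorization F₁ F₂ G₁ G₂) :
    G₁ = switch F₁ F₂ {v | G₁ v = F₁ v} hG.mem_stabilizer_setOf_eq :=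
  eq_switch _ (fun _ => id) fun v hv =>
    (isOneFactorization_iff.mp hG v).elim (fun h => absurd h.1 hv) And.left

theorem IsOneFactorization.snd_eq_switch (hG : IsOneFactorization F₁ F₂ G₁ G₂) :
    G₂ = switch F₁ F₂ {v | G₁ v = F₁ v}ᶜ ((stabilizer_compl ..).ge hG.mem_stabilizer_setOf_eq) := by
  refine eq_switch _ (fun v hv => ?_) fun v hv => ?_
  · exact (isOneFactorization_iff.mp hG v).elim (fun h => absurd h.1 hv) And.right
  · exact hG.snd_apply_eq (not_not.mp hv)

/-- A 1-factorization `(G₁, G₂)` is determined by the set on which `G₁` agrees with `F₁`, which can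
be any `F₂⁻¹ * F₁`-invariant set. Invariance is expressed through the subgroup generated by
`F₂⁻¹ * F₁` to match `invariantSetEquivSetOrbits`. -/
noncomputable def oneFactorizationEquivInvariantSet (hne : ∀ v, F₁ v ≠ F₂ v) :
    {p : Perm V × Perm V // IsOneFactorization F₁ F₂ p.1 p.2} ≃
      {S : Set V // zpowers (F₂⁻¹ * F₁) ≤ stabilizer (Perm V) S} where
  toFun p := ⟨{v | p.1.1 v = F₁ v}, zpowers_le.mpr p.2.mem_stabilizer_setOf_eq⟩
  invFun S :=
    have hS := zpowers_le.mp S.2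
    ⟨(switch F₁ F₂ S hS, switch F₁ F₂ S.1ᶜ ((stabilizer_compl ..).ge hS)),
      isOneFactorization_switch hS⟩
  left_inv p := Subtype.ext <| Prod.ext p.2.fst_eq_switch.symm p.2.snd_eq_switch.symm
  right_inv S := Subtype.ext <| setOf_switch_apply_eq hne (zpowers_le.mp S.2)

end OneFactorization

theorem count_one_factorizations_general {V : Type*} (F₁ F₂ : Equiv.Perm V)
    (hne : ∀ v : V, F₁ v ≠ F₂ v) :
    Cardinal.mk {p : Equiv.Perm V × Equiv.Perm V //
      ∀ v : V, ({p.1 v, p.2 v} : Set V) = {F₁ v, F₂ v}} =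
    2 ^ Cardinal.mk (MulAction.orbitRel.Quotient (Subgroup.zpowers (F₂⁻¹ * F₁)) V) :=
  (Cardinal.mk_congr <| (oneFactorizationEquivInvariantSet hne).trans
    (invariantSetEquivSetOrbits _)).trans Cardinal.mk_set

/-- Number of 1-factorizations is `2^r`: if `F₁(v) ≠ F₂(v)` for all
`v` and `r` is the number of orbits of `x = F₂⁻¹ ∘ F₁` on `V`, then the number of
ordered pairs `(G₁, G₂)` of bijections of `V` with `{G₁(v), G₂(v)} = {F₁(v), F₂(v)}`
for every `v` equals `2^r`. -/
theorem count_one_factorizations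
    {V : Type*} [Fintype V] (F₁ F₂ : Equiv.Perm V)
    (hne : ∀ v : V, F₁ v ≠ F₂ v) (r : ℕ)
    (hr : r = Nat.card
      (MulAction.orbitRel.Quotient (Subgroup.zpowers (F₂⁻¹ * F₁)) V)) :
    Nat.card {p : Equiv.Perm V × Equiv.Perm V //
      ∀ v : V, ({p.1 v, p.2 v} : Set V) = {F₁ v, F₂ v}} = 2 ^ r := by
  rw [← Nat.cast_inj (R := Cardinal), Nat.cast_card, count_one_factorizations_general F₁ F₂ hne, hr,
    Nat.cast_pow, Nat.cast_ofNat, ← Cardinal.power_natCast, Nat.cast_card]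
end

section
/- Suppose u : Fin r → Sym(V) is a family of elements of C = ⟨F₁, F₂⟩ and σ : Fin r → ZMod m satisfies u_i(a(0,j)) = a(i, j + σ(i)) for all i ∈ Fin r and j ∈ ZMod m. Let v₀ = a(0,0) and assume F₁(v₀) ≠ v₀, F₂(v₀) ≠ v₀, and F₁(v₀) ≠ F₂(v₀). Then there exists a subset S ⊆ C with |S| = r·m, containing the identity, F₁, and F₂, such that the evaluation map w ↦ w(v₀) is a bijection from S onto V; i.e. there is a spanning factorization of size |V| = rm containing {∅, F₁, F₂}. -/
/-!
If `x` permutes `V` in rows `a (i, ·)`, acting on each as `j ↦ j + 1`, then a group that contains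
`x` and carries `v₀` to one point of every row is transitive. Evaluation at `v₀` is therefore onto
`V`, and any partial section of it, such as `{1, F₁, F₂}`, extends to a full section.
-/

open MulAction

theorem injOn_smul_insert_one_pair {M α : Type*} [Monoid M] [MulAction M α] {v : α} {g h : M}
    (hg : g • v ≠ v) (hh : h • v ≠ v) (hgh : g • v ≠ h • v) :
    Set.InjOn (· • v) ({1, g, h} : Set M) := by
  rintro w (rfl | rfl | rfl) w' (rfl | rfl | rfl) hw <;> simp_all [eq_comm]

section

variable {G α : Type*} [Group G] [MulAction G α]

/-- A spanning factorization rooted at `v₀`: a subset `S` of the group `H` containing exactly one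
element carrying `v₀` to each given point. The size of `S` is forced by the bijection, so it is not
part of the definition, which then also makes sense for infinite `α`. -/
structure IsSpanningFactorization (H : Subgroup G) (v₀ : α) (S : Set G) : Prop where
  subset : S ⊆ H
  bijOn : Set.BijOn (· • v₀) S Set.univ

variable {H : Subgroup G}

theorem IsSpanningFactorization.ncard_eq {v₀ : α} {S : Set G}
    (hS : IsSpanningFactorization H v₀ S) : S.ncard = Nat.card α :=
  hS.bijOn.ncard_eq.trans (Set.ncard_univ α)

theorem exists_isSpanningFactorization_superset [IsPretransitive H α] {v₀ : α} {T : Set G}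
    (hTH : T ⊆ H) (hT : Set.InjOn (· • v₀) T) :
    ∃ S, T ⊆ S ∧ IsSpanningFactorization H v₀ S := by
  have hsurj : Set.SurjOn (· • v₀) (H : Set G) Set.univ := fun v _ ↦
    let ⟨g, hg⟩ := exists_smul_eq H v₀ v
    ⟨g, g.2, hg⟩
  obtain ⟨S, hTS, hSH, hS⟩ :=
    hT.bijOn_image.exists_extend_of_subset hTH (Set.subset_univ _) hsurj
  exact ⟨S, hTS, hSH, hS⟩

theorem zpow_smul_apply_of_smul_apply_eq_apply_add_one {R : Type*} [AddGroupWithOne R]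
    {f : R → α} {x : G} (hx : ∀ j, x • f j = f (j + 1)) (n : ℤ) (j : R) :
    x ^ n • f j = f (j + n) := by
  induction n generalizing j with
  | zero => simp
  | succ n ih => rw [← mul_self_zpow, mul_smul, ih, hx, add_assoc, Int.cast_add, Int.cast_one]
  | pred n ih =>
    rw [← smul_left_cancel_iff x, smul_smul, mul_self_zpow, sub_add_cancel, ih, hx, add_assoc,
      Int.cast_sub, Int.cast_one, sub_add_cancel]

theorem isPretransitive_of_forall_exists_mem_orbit {ι : Type*} {m : ℕ} {a : ι × ZMod m → α}
    (ha : Function.Surjective a) {x : G} (hxH : x ∈ H)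
    (hx : ∀ i j, x • a (i, j) = a (i, j + 1)) {v₀ : α} (hv₀ : ∀ i, ∃ j, a (i, j) ∈ orbit H v₀) :
    IsPretransitive H α := by
  refine (isPretransitive_iff_orbit_eq_univ (G := H) v₀).2 (Set.eq_univ_of_forall fun v ↦ ?_)
  obtain ⟨⟨i, k⟩, rfl⟩ := ha v
  obtain ⟨j, hj⟩ := hv₀ i
  obtain ⟨n, hn⟩ := ZMod.intCast_surjective (k - j)
  have hshift : x ^ n • a (i, j) = a (i, k) := by
    rw [zpow_smul_apply_of_smul_apply_eq_apply_add_one (hx i), hn, add_sub_cancel]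
  rw [← hshift]
  exact mem_orbit_of_mem_orbit (⟨x ^ n, H.zpow_mem hxH n⟩ : H) hj

theorem spanning_factorization_with_generators_general
    {ι : Type*} {m : ℕ} {a : ι × ZMod m → α} (ha : Function.Surjective a) {F₁ F₂ : G}
    (hx : ∀ i j, (F₂⁻¹ * F₁) • a (i, j) = a (i, j + 1))
    {v₀ : α} (hv₀ : ∀ i, ∃ j, a (i, j) ∈ orbit (Subgroup.closure {F₁, F₂}) v₀)
    (h1 : F₁ • v₀ ≠ v₀) (h2 : F₂ • v₀ ≠ v₀) (h12 : F₁ • v₀ ≠ F₂ • v₀) :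
    ∃ S, {1, F₁, F₂} ⊆ S ∧ IsSpanningFactorization (Subgroup.closure {F₁, F₂}) v₀ S := by
  have hgen : {F₁, F₂} ⊆ (Subgroup.closure {F₁, F₂} : Set G) := Subgroup.subset_closure
  have hF₁ := hgen (Set.mem_insert F₁ {F₂})
  have hF₂ := hgen (Set.mem_insert_of_mem F₁ rfl)
  have := isPretransitive_of_forall_exists_mem_orbit ha (mul_mem (inv_mem hF₂) hF₁) hx hv₀
  exact exists_isSpanningFactorization_superset (Set.insert_subset (one_mem _) hgen)
    (injOn_smul_insert_one_pair h1 h2 h12)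

end

/-- Spanning factorization containing `{∅, F₁, F₂}`: with the
addressing family `u_i ∈ C = ⟨F₁, F₂⟩`, `u_i(a(0,j)) = a(i, j + σ(i))`, root
`v₀ = a(0,0)`, and `F₁(v₀), F₂(v₀), v₀` pairwise distinct, there is a set
`S ⊆ C` of size `r·m` containing the identity, `F₁`, and `F₂`, whose evaluation
map `w ↦ w(v₀)` is a bijection from `S` onto `V`. -/
theorem spanning_factorization_with_generators
    {r m : ℕ} (hr : 0 < r) [NeZero m] {V : Type*} [Fintype V]
    (a : Fin r × ZMod m ≃ V) (F₁ F₂ : Equiv.Perm V)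
    (hx : ∀ (i : Fin r) (j : ZMod m), (F₂⁻¹ * F₁) (a (i, j)) = a (i, j + 1))
    (u : Fin r → Equiv.Perm V)
    (hu_mem : ∀ i : Fin r, u i ∈ Subgroup.closure ({F₁, F₂} : Set (Equiv.Perm V)))
    (σ : Fin r → ZMod m)
    (hu : ∀ (i : Fin r) (j : ZMod m), (u i) (a (⟨0, hr⟩, j)) = a (i, j + σ i))
    (h1 : F₁ (a (⟨0, hr⟩, 0)) ≠ a (⟨0, hr⟩, 0))
    (h2 : F₂ (a (⟨0, hr⟩, 0)) ≠ a (⟨0, hr⟩, 0))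
    (h12 : F₁ (a (⟨0, hr⟩, 0)) ≠ F₂ (a (⟨0, hr⟩, 0))) :
    ∃ S : Finset (Equiv.Perm V),
      ↑S ⊆ (Subgroup.closure ({F₁, F₂} : Set (Equiv.Perm V)) : Set (Equiv.Perm V)) ∧
      S.card = r * m ∧
      (1 : Equiv.Perm V) ∈ S ∧ F₁ ∈ S ∧ F₂ ∈ S ∧
      Set.BijOn (fun w : Equiv.Perm V => w (a (⟨0, hr⟩, 0))) ↑S Set.univ := by
  obtain ⟨S, hgen, hS⟩ := spanning_factorization_with_generators_general a.surjective hx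
    (fun i ↦ ⟨0 + σ i, ⟨u i, hu_mem i⟩, hu i 0⟩) h1 h2 h12
  lift S to Finset (Equiv.Perm V) using S.toFinite
  have hcard : S.card = r * m := by
    rw [← Set.ncard_coe_finset, hS.ncard_eq, ← Nat.card_congr a]
    simp
  exact ⟨S, hS.subset, hcard, hgen (by simp), hgen (by simp), hgen (by simp), hS.bijOn⟩
end
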